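/- arXiv:2310.20368 — 8 statements merged into one kernel-verified Lean document; each statement's English description precedes it below -/
import Mathlib

section
/- Let H be a real Hilbert space, w̄ ∈ H, and let θ, φ be real numbers with 0 ≤ θ and 0 < φ ≤ 1. Let x₋, x, w, z ∈ H satisfy w = x + θ(x − x₋) and ‖z − w̄‖ ≤ ‖w − w̄‖, and set x₊ := (1 − φ)w + φz. Then, with δ := (1 + θ)θ + φ⁻¹(1 − φ)(1 − θ)θ (and θ ≤ 1), ‖x₊ − w̄‖² ≤ ‖x − w̄‖² + θ(‖x − w̄‖² − ‖x₋ − w̄‖²) − φ⁻¹(1 − φ)(1 − θ)‖x₊ − x‖² + δ‖x − x₋‖². -/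
/-!
Both the extrapolation `w = (1 + θ) x - θ x₋` and the relaxation `x₊ = (1 - φ) w + φ z` are affine
combinations, so the identity for the squared norm of an affine combination computes
`‖w - w̄‖²` exactly and gives `‖x₊ - w̄‖² ≤ ‖w - w̄‖² - φ⁻¹ (1 - φ) ‖x₊ - w‖²`. The same identity
applied to `x₊ - w = (1 - θ) (x₊ - x) + θ ((x₊ - x) - (x - x₋))` bounds `‖x₊ - w‖²` from below.
-/

section InnerProductSpace

variable {E : Type*} [SeminormedAddCommGroup E] [InnerProductSpace ℝ E]

theorem norm_one_sub_smul_add_smul_sq (t : ℝ) (u v : E) :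
    ‖(1 - t) • u + t • v‖ ^ 2 =
      (1 - t) * ‖u‖ ^ 2 + t * ‖v‖ ^ 2 - t * (1 - t) * ‖u - v‖ ^ 2 := by
  simp only [norm_add_sq_real, norm_sub_sq_real, real_inner_smul_left, real_inner_smul_right,
    norm_smul, mul_pow, Real.norm_eq_abs, sq_abs]
  ring

theorem norm_add_smul_sub_sub_sq (θ : ℝ) (x y c : E) :
    ‖x + θ • (x - y) - c‖ ^ 2 =
      ‖x - c‖ ^ 2 + θ * (‖x - c‖ ^ 2 - ‖y - c‖ ^ 2) + (1 + θ) * θ * ‖x - y‖ ^ 2 := by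
  have h_affine : x + θ • (x - y) - c = (1 - -θ) • (x - c) + (-θ) • (y - c) := by module
  rw [h_affine, norm_one_sub_smul_add_smul_sq, sub_sub_sub_cancel_right]
  ring

theorem le_norm_sub_smul_sq {θ : ℝ} (hθ : 0 ≤ θ) (u v : E) :
    (1 - θ) * ‖u‖ ^ 2 - (1 - θ) * θ * ‖v‖ ^ 2 ≤ ‖u - θ • v‖ ^ 2 := by
  have h_affine : u - θ • v = (1 - θ) • u + θ • (u - v) := by module
  have h_nonneg : 0 ≤ θ * ‖u - v‖ ^ 2 := by positivity
  rw [h_affine, norm_one_sub_smul_add_smul_sq, sub_sub_cancel]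
  linarith

theorem norm_one_sub_smul_add_smul_sub_sq_le {φ : ℝ} (hφ : 0 < φ) {w z c : E}
    (hz : ‖z - c‖ ≤ ‖w - c‖) :
    ‖(1 - φ) • w + φ • z - c‖ ^ 2 ≤
      ‖w - c‖ ^ 2 - φ⁻¹ * (1 - φ) * ‖(1 - φ) • w + φ • z - w‖ ^ 2 := by
  have h_affine : (1 - φ) • w + φ • z - c = (1 - φ) • (w - c) + φ • (z - c) := by module
  have h_step : (1 - φ) • w + φ • z - w = φ • (z - w) := by module
  calc ‖(1 - φ) • w + φ • z - c‖ ^ 2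
      = (1 - φ) * ‖w - c‖ ^ 2 + φ * ‖z - c‖ ^ 2 - φ * (1 - φ) * ‖z - w‖ ^ 2 := by
        rw [h_affine, norm_one_sub_smul_add_smul_sq, sub_sub_sub_cancel_right, norm_sub_rev w z]
    _ ≤ (1 - φ) * ‖w - c‖ ^ 2 + φ * ‖w - c‖ ^ 2 - φ * (1 - φ) * ‖z - w‖ ^ 2 := by gcongr
    _ = ‖w - c‖ ^ 2 - φ⁻¹ * (1 - φ) * ‖(1 - φ) • w + φ • z - w‖ ^ 2 := by
        rw [h_step, norm_smul, Real.norm_of_nonneg hφ.le]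
        field_simp
        ring

theorem stmt7_general (wbar : E) (θ φ : ℝ) (hθ0 : 0 ≤ θ) (hφ0 : 0 < φ) (hφ1 : φ ≤ 1)
    (xm x w z : E) (hw : w = x + θ • (x - xm)) (hz : ‖z - wbar‖ ≤ ‖w - wbar‖)
    (xp : E) (hxp : xp = (1 - φ) • w + φ • z)
    (δ : ℝ) (hδ : δ = (1 + θ) * θ + φ⁻¹ * (1 - φ) * (1 - θ) * θ) :
    ‖xp - wbar‖ ^ 2 ≤ ‖x - wbar‖ ^ 2 + θ * (‖x - wbar‖ ^ 2 - ‖xm - wbar‖ ^ 2)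
      - φ⁻¹ * (1 - φ) * (1 - θ) * ‖xp - x‖ ^ 2 + δ * ‖x - xm‖ ^ 2 := by
  have h_coeff : 0 ≤ φ⁻¹ * (1 - φ) := mul_nonneg (inv_nonneg.2 hφ0.le) (sub_nonneg.2 hφ1)
  have h_relax : ‖xp - wbar‖ ^ 2 ≤ ‖w - wbar‖ ^ 2 - φ⁻¹ * (1 - φ) * ‖xp - w‖ ^ 2 :=
    hxp ▸ norm_one_sub_smul_add_smul_sub_sq_le hφ0 hz
  have h_step : (1 - θ) * ‖xp - x‖ ^ 2 - (1 - θ) * θ * ‖x - xm‖ ^ 2 ≤ ‖xp - w‖ ^ 2 := by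
    rw [hw, ← sub_sub]
    exact le_norm_sub_smul_sq hθ0 _ _
  calc ‖xp - wbar‖ ^ 2
      ≤ ‖w - wbar‖ ^ 2 - φ⁻¹ * (1 - φ) * ‖xp - w‖ ^ 2 := h_relax
    _ ≤ ‖w - wbar‖ ^ 2 - φ⁻¹ * (1 - φ) *
          ((1 - θ) * ‖xp - x‖ ^ 2 - (1 - θ) * θ * ‖x - xm‖ ^ 2) :=
        sub_le_sub_left (mul_le_mul_of_nonneg_left h_step h_coeff) _
    _ = _ := by
        rw [hw, norm_add_smul_sub_sub_sq, hδ]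
        ring

end InnerProductSpace

theorem stmt7 {H : Type*} [NormedAddCommGroup H] [InnerProductSpace ℝ H]
    [CompleteSpace H]
    (wbar : H) (θ φ : ℝ) (hθ0 : 0 ≤ θ) (hθ1 : θ ≤ 1) (hφ0 : 0 < φ) (hφ1 : φ ≤ 1)
    (xm x w z : H) (hw : w = x + θ • (x - xm)) (hz : ‖z - wbar‖ ≤ ‖w - wbar‖)
    (xp : H) (hxp : xp = (1 - φ) • w + φ • z)
    (δ : ℝ) (hδ : δ = (1 + θ)*θ + φ⁻¹*(1 - φ)*(1 - θ)*θ) :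
    ‖xp - wbar‖^2 ≤ ‖x - wbar‖^2 + θ*(‖x - wbar‖^2 - ‖xm - wbar‖^2)
      - φ⁻¹*(1 - φ)*(1 - θ)*‖xp - x‖^2 + δ*‖x - xm‖^2 :=
  stmt7_general wbar θ φ hθ0 hφ0 hφ1 xm x w z hw hz xp hxp δ hδ
end

section
/- Let ε > 0 and θ ∈ [0, 1). Let {γₙ}ₙ≥₁, {dₙ}ₙ≥₁, {δₙ}ₙ≥₁ be sequences of nonnegative real numbers and {θₙ}ₙ≥₁ a sequence with θ₁ = 0 and 0 ≤ θₙ ≤ θ for all n. Define Γₙ := γₙ − θₙγₙ₋₁ + δₙdₙ₋₁ (with γ₀, d₀ ≥ 0 given) and assume Γₙ₊₁ ≤ Γₙ − εdₙ for all n ≥ 1. Then: (a) γₙ ≤ θⁿγ₁ + Γ₁/(1 − θ) for all n ≥ 1, so {γₙ} is bounded; and (b) the series Σₙ dₙ converges, i.e., Σₙ₌₁^∞ dₙ < ∞. -/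
/-!
Since `γ n ≤ θbar * γ (n - 1) + Γ n` and `Γ` decreases, `γ` is dominated by the affine contraction
`x ↦ θbar * x + Γ 1`. Every half-line `(-∞, M]` containing the fixed point `Γ 1 / (1 - θbar)`
is invariant under this contraction, so `γ` never exceeds the larger of `γ 1` and the fixed point.
Boundedness of `γ` bounds `Γ` from below, and the telescoping decrease of `Γ` pays for `ε * ∑ d`.
If `θ 1 = 0`, then `γ 1 ≤ Γ 1` already lies below the fixed point, which by itself bounds `γ`.
-/

section AffineRecursion

variable {𝕜 : Type*} [Field 𝕜] [LinearOrder 𝕜] [IsStrictOrderedRing 𝕜] {r c : 𝕜}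

theorem mul_add_le_of_div_one_sub_le {M : 𝕜} (hr : r < 1) (hM : c / (1 - r) ≤ M) :
    r * M + c ≤ M := by
  have hc : c ≤ M * (1 - r) := (div_le_iff₀ (sub_pos.2 hr)).1 hM
  linarith

theorem le_max_div_one_sub_of_succ_le {u : ℕ → 𝕜} (hr0 : 0 ≤ r) (hr1 : r < 1)
    (hu : ∀ n, u (n + 1) ≤ r * u n + c) (n : ℕ) : u n ≤ max (u 0) (c / (1 - r)) := by
  induction n with
  | zero => exact le_max_left _ _
  | succ n ih =>
    calc u (n + 1) ≤ r * u n + c := hu n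
      _ ≤ r * max (u 0) (c / (1 - r)) + c := by gcongr
      _ ≤ max (u 0) (c / (1 - r)) := mul_add_le_of_div_one_sub_le hr1 (le_max_right _ _)

theorem le_max_div_one_sub_of_antitone {u G : ℕ → 𝕜} (hr0 : 0 ≤ r) (hr1 : r < 1)
    (hG : Antitone G) (huG : ∀ n, u (n + 1) ≤ r * u n + G (n + 1)) (n : ℕ) :
    u n ≤ max (u 0) (G 0 / (1 - r)) :=
  le_max_div_one_sub_of_succ_le hr0 hr1
    (fun k => (huG k).trans (add_le_add_right (hG (Nat.zero_le _)) _)) n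

theorem bddBelow_range_of_le_mul_add {M : 𝕜} {u G : ℕ → 𝕜} (hr : 0 ≤ r) (hu : ∀ n, 0 ≤ u n)
    (huM : ∀ n, u n ≤ M) (huG : ∀ n, u (n + 1) ≤ r * u n + G (n + 1)) :
    BddBelow (Set.range G) := by
  refine ⟨min (G 0) (-(r * M)), Set.forall_mem_range.2 fun n => ?_⟩
  cases n with
  | zero => exact min_le_left _ _
  | succ n =>
    refine (min_le_right _ _).trans ?_
    linarith [hu (n + 1), huG n, mul_le_mul_of_nonneg_left (huM n) hr]

theorem max_div_one_sub_le_pow_mul_add {a : 𝕜} (hr0 : 0 ≤ r) (hr1 : r < 1) (ha : 0 ≤ a)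
    (hac : a ≤ c) (n : ℕ) : max a (c / (1 - r)) ≤ r ^ n * a + c / (1 - r) := by
  have hc : c ≤ c / (1 - r) := le_div_self (ha.trans hac) (sub_pos.2 hr1) (sub_le_self 1 hr0)
  calc max a (c / (1 - r)) = c / (1 - r) := max_eq_right (hac.trans hc)
    _ ≤ r ^ n * a + c / (1 - r) := le_add_of_nonneg_left (by positivity)

end AffineRecursion

theorem summable_of_succ_le_sub {f g : ℕ → ℝ} (hg : ∀ n, 0 ≤ g n)
    (hfg : ∀ n, f (n + 1) ≤ f n - g n) (hf : BddBelow (Set.range f)) : Summable g := by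
  obtain ⟨b, hb⟩ := hf
  refine summable_of_sum_range_le (c := f 0 - b) hg fun n => ?_
  calc ∑ k ∈ Finset.range n, g k ≤ ∑ k ∈ Finset.range n, (f k - f (k + 1)) :=
        Finset.sum_le_sum fun k _ => le_sub_comm.1 (hfg k)
    _ = f 0 - f n := Finset.sum_range_sub' f n
    _ ≤ f 0 - b := sub_le_sub_left (hb ⟨n, rfl⟩) _

theorem stmt9_general {ε θbar : ℝ} (hε : 0 < ε) (hθbar0 : 0 ≤ θbar) (hθbar1 : θbar < 1)
    {γ d δ θ : ℕ → ℝ} (hγ : ∀ n, 0 ≤ γ n) (hd : ∀ n, 0 ≤ d n) (hδ : ∀ n, 0 ≤ δ n)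
    (hθb : ∀ n, θ n ≤ θbar) {Γ : ℕ → ℝ}
    (hΓ : ∀ n ≥ 1, Γ n = γ n - θ n * γ (n - 1) + δ n * d (n - 1))
    (hdec : ∀ n ≥ 1, Γ (n + 1) ≤ Γ n - ε * d n) :
    (∀ n ≥ 1, γ n ≤ max (γ 1) (Γ 1 / (1 - θbar))) ∧ Summable d := by
  have hγΓ (n : ℕ) : γ (n + 1) ≤ θbar * γ n + Γ (n + 1) := by
    have hΓn : Γ (n + 1) = γ (n + 1) - θ (n + 1) * γ n + δ (n + 1) * d n := hΓ _ n.succ_pos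
    linarith [mul_le_mul_of_nonneg_right (hθb (n + 1)) (hγ n), mul_nonneg (hδ (n + 1)) (hd n)]
  have hεd (n : ℕ) : 0 ≤ ε * d (n + 1) := mul_nonneg hε.le (hd _)
  have hdec' (n : ℕ) : Γ (n + 1 + 1) ≤ Γ (n + 1) - ε * d (n + 1) := hdec _ n.succ_pos
  have hanti : Antitone fun n => Γ (n + 1) :=
    antitone_nat_of_succ_le fun n => (hdec' n).trans (sub_le_self _ (hεd n))
  have hbound : ∀ n, γ (n + 1) ≤ max (γ 1) (Γ 1 / (1 - θbar)) :=
    le_max_div_one_sub_of_antitone (u := fun n => γ (n + 1)) hθbar0 hθbar1 hanti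
      fun n => hγΓ (n + 1)
  have hbelow : BddBelow (Set.range fun n => Γ (n + 1)) :=
    bddBelow_range_of_le_mul_add hθbar0 (fun n => hγ (n + 1)) hbound fun n => hγΓ (n + 1)
  have hsum : Summable fun n => ε * d (n + 1) := summable_of_succ_le_sub hεd hdec' hbelow
  refine ⟨fun n hn => ?_, (summable_nat_add_iff 1).1 ((summable_mul_left_iff hε.ne').1 hsum)⟩
  obtain ⟨m, rfl⟩ := Nat.exists_eq_add_of_le' hn
  exact hbound m

theorem stmt9 (ε θbar : ℝ) (hε : 0 < ε) (hθbar0 : 0 ≤ θbar) (hθbar1 : θbar < 1)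
    (γ d δ θ : ℕ → ℝ)
    (hγ : ∀ n, 0 ≤ γ n) (hd : ∀ n, 0 ≤ d n) (hδ : ∀ n, 0 ≤ δ n)
    (hθ1 : θ 1 = 0) (hθ0 : ∀ n, 0 ≤ θ n) (hθb : ∀ n, θ n ≤ θbar)
    (Γ : ℕ → ℝ)
    (hΓ : ∀ n ≥ 1, Γ n = γ n - θ n * γ (n-1) + δ n * d (n-1))
    (hdec : ∀ n ≥ 1, Γ (n+1) ≤ Γ n - ε * d n) :
    (∀ n ≥ 1, γ n ≤ θbar^n * γ 1 + Γ 1 / (1 - θbar)) ∧ Summable d := by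
  have hγ1 : γ 1 ≤ Γ 1 := by simpa [hΓ, hθ1] using mul_nonneg (hδ 1) (hd 0)
  exact (stmt9_general hε hθbar0 hθbar1 hγ hd hδ hθb hΓ hdec).imp_left fun hbound n hn =>
    (hbound n hn).trans (max_div_one_sub_le_pow_mul_add hθbar0 hθbar1 (hγ 1) hγ1 n)
end

section
/- Let H be a real Hilbert space, w̄ ∈ H, ε > 0, θ ∈ [0, 1) and φ̲ > 0. Let {xₙ}, {wₙ}, {zₙ} be sequences in H and {θₙ}, {φₙ} real sequences with θ₁ = 0, 0 ≤ θₙ ≤ θₙ₊₁ ≤ θ < 1 and φ̲ ≤ φₙ ≤ 1, satisfying: wₙ = xₙ + θₙ(xₙ − xₙ₋₁), xₙ₊₁ = (1 − φₙ)wₙ + φₙzₙ, ‖zₙ − w̄‖ ≤ ‖wₙ − w̄‖ for all n, and the inertial condition of Assumption 3.2 (one of: (i) φₙ, φₙ₊₁ ∈ (0, 1/2), φₙ⁻¹ − φₙ₊₁⁻¹ + 3 > 0 and θₙ₊₁ ≤ βₙ := (1/(2(φₙ₊₁⁻¹ − 2)))(φₙ⁻¹ + φₙ₊₁⁻¹ −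 1 − Δₙ), Δₙ := √((φₙ⁻¹ + φₙ₊₁⁻¹ − 1)² − 4(φₙ⁻¹ − 1 − ε)(φₙ₊₁⁻¹ − 2)); (ii) φₙ = φₙ₊₁ = 1/2 and θₙ₊₁ ≤ (1 − ε)/3; (iii) φₙ, φₙ₊₁ ∈ (1/2, 1 − ε] and θₙ₊₁ ≤ √(pₙ² + qₙ) − pₙ, pₙ := (φₙ⁻¹ + φₙ₊₁⁻¹ − 1)/(2(2 − φₙ₊₁⁻¹)), qₙ := (φₙ⁻¹ − 1 − ε)/(2 − φₙ₊₁⁻¹)). Then Σₙ₌₁^∞ ‖xₙ₊₁ − xₙ‖² < ∞, the limit limₙ→∞ ‖xₙ − w̄‖ exists, and {xₙ} is bounded. -/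
open Filter Topology

/-- Assumption 3.2 of the paper on the inertial factor `θ` and the relaxation
parameter `φ`, at index `n` (one of cases (i), (ii), (iii)). -/
def Assumption32 (ε : ℝ) (θ φ : ℕ → ℝ) (n : ℕ) : Prop :=
  (φ n ∈ Set.Ioo (0:ℝ) (1/2) ∧ φ (n+1) ∈ Set.Ioo (0:ℝ) (1/2) ∧
    0 < (φ n)⁻¹ - (φ (n+1))⁻¹ + 3 ∧
    θ (n+1) ≤ (1/(2*((φ (n+1))⁻¹ - 2))) * ((φ n)⁻¹ + (φ (n+1))⁻¹ - 1 -
      Real.sqrt (((φ n)⁻¹ + (φ (n+1))⁻¹ - 1)^2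
        - 4*((φ n)⁻¹ - 1 - ε)*((φ (n+1))⁻¹ - 2)))) ∨
  (φ n = 1/2 ∧ φ (n+1) = 1/2 ∧ θ (n+1) ≤ (1 - ε)/3) ∨
  (φ n ∈ Set.Ioc (1/2 : ℝ) (1 - ε) ∧ φ (n+1) ∈ Set.Ioc (1/2 : ℝ) (1 - ε) ∧
    θ (n+1) ≤ Real.sqrt ((((φ n)⁻¹ + (φ (n+1))⁻¹ - 1)/(2*(2 - (φ (n+1))⁻¹)))^2
        + ((φ n)⁻¹ - 1 - ε)/(2 - (φ (n+1))⁻¹))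
      - ((φ n)⁻¹ + (φ (n+1))⁻¹ - 1)/(2*(2 - (φ (n+1))⁻¹)))

/-!
Write `ρ n = (φ n)⁻¹ - 1`, `a n = ‖x n - wbar‖ ^ 2` and `d n = ‖x (n + 1) - x n‖ ^ 2`. Expanding
squares turns one step of the iteration into
`a (n + 1) ≤ (1 + θ n) * a n - θ n * a (n - 1) + σ n * d (n - 1) - r n * d n` with
`σ n = θ n * (1 + θ n) + ρ n * (θ n * (1 - θ n))` and `r n = ρ n * (1 - θ n)`, so that
`a n - θ n * a (n - 1) + σ n * d (n - 1)` decreases by at least `(r n - σ (n + 1)) * d n`.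
Assumption 3.2 places `θ (n + 1)` on the side of a root of a quadratic on which
`r n - σ (n + 1) ≥ ε`; this makes `d` summable. As `ρ` grows by at most `3` per step, `σ (n + 1)` is
also at most a constant multiple of `r n - σ (n + 1)`, even if `φ n → 0`. Hence `σ n * d (n - 1)`
is summable as well, and Alvarez's lemma gives the convergence of `a`.
-/

section RealSequences

variable {a d e t u δ σ r : ℕ → ℝ} {q c ε C : ℝ}

theorem bddAbove_range_of_succ_le_mul_add (hq0 : 0 ≤ q) (hq1 : q < 1)
    (h : ∀ n, a (n + 1) ≤ q * a n + c) : BddAbove (Set.range a) := by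
  set M := max (a 0) (c / (1 - q))
  have hM : q * M + c ≤ M := by
    have : c ≤ M * (1 - q) := (div_le_iff₀ (sub_pos.2 hq1)).1 (le_max_right _ _)
    linarith
  refine ⟨M, Set.forall_mem_range.2 fun n => ?_⟩
  induction n with
  | zero => exact le_max_left _ _
  | succ n ih => exact (h n).trans (le_trans (by gcongr) hM)

theorem summable_of_succ_le_mul_add (hq : q < 1) (hu : ∀ n, 0 ≤ u n) (hδ : Summable δ)
    (h : ∀ n, u (n + 1) ≤ q * u n + δ n) : Summable u := by
  obtain ⟨D, hD⟩ := hδ.hasSum.tendsto_sum_nat.bddAbove_range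
  refine summable_of_sum_range_le (c := (u 0 + D) / (1 - q)) hu fun n => ?_
  rw [le_div_iff₀ (sub_pos.2 hq)]
  have hshift : ∑ i ∈ Finset.range n, u (i + 1) ≤
      q * ∑ i ∈ Finset.range n, u i + ∑ i ∈ Finset.range n, δ i := by
    rw [Finset.mul_sum, ← Finset.sum_add_distrib]
    exact Finset.sum_le_sum fun i _ => h i
  have hδn : ∑ i ∈ Finset.range n, δ i ≤ D := hD ⟨n, rfl⟩
  linarith [Finset.sum_range_succ' u n, Finset.sum_range_succ u n, hu n]

theorem exists_tendsto_of_succ_le_add_summable (ha : BddBelow (Set.range a)) (hu : Summable u)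
    (h : ∀ n, a (n + 1) ≤ a n + u n) : ∃ l, Tendsto a atTop (𝓝 l) := by
  obtain ⟨m, hm⟩ := ha
  obtain ⟨U, hU⟩ := hu.hasSum.tendsto_sum_nat.bddAbove_range
  have hanti : Antitone fun n => a n - ∑ i ∈ Finset.range n, u i :=
    antitone_nat_of_succ_le fun n => by
      rw [Finset.sum_range_succ]
      linarith [h n]
  have hbdd : BddBelow (Set.range fun n => a n - ∑ i ∈ Finset.range n, u i) :=
    ⟨m - U, Set.forall_mem_range.2 fun n => sub_le_sub (hm ⟨n, rfl⟩) (hU ⟨n, rfl⟩)⟩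
  have hlim := (tendsto_atTop_ciInf hanti hbdd).add hu.hasSum.tendsto_sum_nat
  exact ⟨_, by simpa only [sub_add_cancel] using hlim⟩

/-- Alvarez's lemma: up to `δ`, the positive parts of the increments shrink by the factor `q`,
hence they are summable. -/
theorem exists_tendsto_of_inertial_le (ha : BddBelow (Set.range a)) (hq : q < 1)
    (ht0 : ∀ n, 0 ≤ t n) (htq : ∀ n, t n ≤ q) (hδ0 : ∀ n, 0 ≤ δ n) (hδ : Summable δ)
    (h : ∀ n, a (n + 2) - a (n + 1) ≤ t n * (a (n + 1) - a n) + δ n) :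
    ∃ l, Tendsto a atTop (𝓝 l) := by
  set u : ℕ → ℝ := fun n => max (a (n + 1) - a n) 0
  have hu0 (n : ℕ) : 0 ≤ u n := le_max_right _ _
  have hau (n : ℕ) : a (n + 1) - a n ≤ u n := le_max_left _ _
  have hu_succ (n : ℕ) : u (n + 1) ≤ q * u n + δ n := by
    have htu : t n * u n ≤ q * u n := mul_le_mul_of_nonneg_right (htq n) (hu0 n)
    have hqu : 0 ≤ q * u n := (mul_nonneg (ht0 n) (hu0 n)).trans htu
    refine max_le ?_ (add_nonneg hqu (hδ0 n))
    linarith [h n, mul_le_mul_of_nonneg_left (hau n) (ht0 n)]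
  exact exists_tendsto_of_succ_le_add_summable ha (summable_of_succ_le_mul_add hq hu0 hδ hu_succ)
    fun n => by linarith [hau n]

theorem summable_of_lyapunov_descent {E : ℕ → ℝ} (hq0 : 0 ≤ q) (hq1 : q < 1)
    (ha : ∀ n, 0 ≤ a n) (he : ∀ n, 0 ≤ e n) (haE : ∀ n, a (n + 1) - q * a n ≤ E n)
    (hE : ∀ n, E (n + 1) + e n ≤ E n) : Summable e := by
  have hE0 (n : ℕ) : E n ≤ E 0 :=
    antitone_nat_of_succ_le (fun k => by linarith [hE k, he k]) n.zero_le
  obtain ⟨M, hM⟩ : BddAbove (Set.range a) :=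
    bddAbove_range_of_succ_le_mul_add hq0 hq1 (c := E 0) fun n => by linarith [haE n, hE0 n]
  refine summable_of_sum_range_le (c := E 0 + q * M) he fun n => ?_
  have htele : ∑ i ∈ Finset.range n, e i ≤ E 0 - E n := by
    rw [← Finset.sum_range_sub']
    exact Finset.sum_le_sum fun i _ => le_sub_iff_add_le'.2 (hE i)
  have hqM : q * a n ≤ q * M := mul_le_mul_of_nonneg_left (hM ⟨n, rfl⟩) hq0
  linarith [haE n, ha (n + 1)]

theorem summable_gap_mul_of_inertial_descent (hq : q < 1) (ha : ∀ n, 0 ≤ a n)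
    (hd : ∀ n, 0 ≤ d n) (ht0 : ∀ n, 0 ≤ t n) (ht : ∀ n, t n ≤ t (n + 1)) (htq : ∀ n, t n ≤ q)
    (hσ : ∀ n, 0 ≤ σ n) (hgap : ∀ n, 0 ≤ r n - σ (n + 1))
    (h : ∀ n, a (n + 2) ≤
      (1 + t n) * a (n + 1) - t n * a n + σ n * d n - r n * d (n + 1)) :
    Summable fun n => (r n - σ (n + 1)) * d (n + 1) := by
  refine summable_of_lyapunov_descent (a := a) (E := fun n => a (n + 1) - t n * a n + σ n * d n)
    ((ht0 0).trans (htq 0)) hq ha (fun n => mul_nonneg (hgap n) (hd _)) (fun n => ?_) fun n => ?_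
  · linarith [mul_le_mul_of_nonneg_right (htq n) (ha n), mul_nonneg (hσ n) (hd n)]
  · linarith [h n, mul_le_mul_of_nonneg_right (ht n) (ha (n + 1))]

theorem summable_and_exists_tendsto_of_inertial_descent (hε : 0 < ε) (hq : q < 1)
    (ha : ∀ n, 0 ≤ a n) (hd : ∀ n, 0 ≤ d n) (ht0 : ∀ n, 0 ≤ t n) (ht : ∀ n, t n ≤ t (n + 1))
    (htq : ∀ n, t n ≤ q) (hσ : ∀ n, 0 ≤ σ n) (hgap : ∀ n, ε ≤ r n - σ (n + 1))
    (hσgap : ∀ n, σ (n + 1) ≤ C * (r n - σ (n + 1)))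
    (h : ∀ n, a (n + 2) ≤
      (1 + t n) * a (n + 1) - t n * a n + σ n * d n - r n * d (n + 1)) :
    Summable d ∧ ∃ l, Tendsto a atTop (𝓝 l) := by
  have hgap0 (n : ℕ) : 0 ≤ r n - σ (n + 1) := hε.le.trans (hgap n)
  have hsum := summable_gap_mul_of_inertial_descent hq ha hd ht0 ht htq hσ hgap0 h
  have hσd0 (n : ℕ) : 0 ≤ σ n * d n := mul_nonneg (hσ n) (hd n)
  have hd_sum : Summable d := by
    rw [← summable_nat_add_iff 1, ← summable_mul_left_iff hε.ne']
    exact hsum.of_nonneg_of_le (fun n => mul_nonneg hε.le (hd _))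
      fun n => mul_le_mul_of_nonneg_right (hgap n) (hd _)
  have hσd_sum : Summable fun n => σ n * d n := by
    rw [← summable_nat_add_iff 1]
    refine (hsum.mul_left C).of_nonneg_of_le (fun n => hσd0 _) fun n => ?_
    rw [← mul_assoc]
    exact mul_le_mul_of_nonneg_right (hσgap n) (hd _)
  refine ⟨hd_sum, exists_tendsto_of_inertial_le ⟨0, Set.forall_mem_range.2 ha⟩ hq ht0 htq
    hσd0 hσd_sum fun n => ?_⟩
  have hrd : 0 ≤ r n * d (n + 1) :=
    mul_nonneg (by linarith [hgap0 n, hσ (n + 1)]) (hd _)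
  linarith [h n]

end RealSequences

section Quadratics

variable {A B C s : ℝ}

theorem quadratic_nonneg_of_le_smaller_root (hA : 0 < A)
    (h : s ≤ 1 / (2 * A) * (B - √(B ^ 2 - 4 * C * A))) : 0 ≤ A * s ^ 2 - B * s + C := by
  have hs : s * (2 * A) ≤ B - √(B ^ 2 - 4 * C * A) := by
    rwa [one_div_mul_eq_div, le_div_iff₀ (by positivity)] at h
  have hdisc : B ^ 2 - 4 * C * A ≤ (B - s * (2 * A)) ^ 2 :=
    (Real.sqrt_le_iff.1 (le_sub_comm.1 hs)).2
  refine nonneg_of_mul_nonneg_right (a := 4 * A) ?_ (by positivity)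
  linarith

theorem quadratic_le_of_le_larger_root (hA : 0 < A) (hB : 0 < B) (hs : 0 ≤ s)
    (h : s ≤ √((B / (2 * A)) ^ 2 + C / A) - B / (2 * A)) : A * s ^ 2 + B * s ≤ C := by
  have hsq : (s + B / (2 * A)) ^ 2 ≤ (B / (2 * A)) ^ 2 + C / A :=
    (Real.le_sqrt' (by positivity)).1 (le_sub_iff_add_le.1 h)
  calc A * s ^ 2 + B * s = A * ((s + B / (2 * A)) ^ 2 - (B / (2 * A)) ^ 2) := by
        field_simp
        ring
    _ ≤ A * (C / A) := by gcongr; exact sub_le_iff_le_add'.2 hsq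
    _ = C := mul_div_cancel₀ C hA.ne'

end Quadratics

/-- The coefficient `σ` of `‖x₁ - x₀‖ ^ 2` in the descent inequality for one step with relaxation
parameter `f` and inertial factor `t`; it measures the squared distance to a solution that the
extrapolation may gain. -/
noncomputable def inertialGain (f t : ℝ) : ℝ := t * (1 + t) + (f⁻¹ - 1) * (t * (1 - t))

/-- The coefficient `r` of `-‖x₂ - x₁‖ ^ 2` in the descent inequality for one step with relaxation
parameter `f` and inertial factor `t`; it measures the decrease due to the relaxation. -/
noncomputable def relaxationLoss (f t : ℝ) : ℝ := (f⁻¹ - 1) * (1 - t)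

section Coefficients

variable {f f' s t q ε : ℝ}

theorem inv_sub_one_nonneg_of_mem_Ioc (hf : f ∈ Set.Ioc 0 1) : 0 ≤ f⁻¹ - 1 :=
  sub_nonneg.2 ((one_le_inv₀ hf.1).2 hf.2)

theorem inertialGain_nonneg (hf : f ∈ Set.Ioc 0 1) (ht : t ∈ Set.Icc 0 1) :
    0 ≤ inertialGain f t :=
  add_nonneg (mul_nonneg ht.1 (by linarith [ht.1]))
    (mul_nonneg (inv_sub_one_nonneg_of_mem_Ioc hf) (mul_nonneg ht.1 (sub_nonneg.2 ht.2)))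

theorem relaxationLoss_anti (hf : f ∈ Set.Ioc 0 1) (hst : s ≤ t) :
    relaxationLoss f t ≤ relaxationLoss f s :=
  mul_le_mul_of_nonneg_left (sub_le_sub_left hst 1) (inv_sub_one_nonneg_of_mem_Ioc hf)

theorem relaxationLoss_sub_inertialGain (f f' t : ℝ) :
    relaxationLoss f t - inertialGain f' t =
      (f'⁻¹ - 2) * t ^ 2 - (f⁻¹ + f'⁻¹ - 1) * t + (f⁻¹ - 1) := by
  unfold relaxationLoss inertialGain
  ring

theorem inertialGain_le_of_inv_le_add_three (hff' : f'⁻¹ ≤ f⁻¹ + 3) (ht : t ∈ Set.Icc 0 1) :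
    inertialGain f' t ≤ 2 + (f⁻¹ - 1) * (t * (1 - t)) := by
  have ht1 : 0 ≤ t * (1 - t) := mul_nonneg ht.1 (sub_nonneg.2 ht.2)
  calc inertialGain f' t ≤ t * (1 + t) + (f⁻¹ + 3 - 1) * (t * (1 - t)) := by
        unfold inertialGain
        gcongr
    _ = 2 - 2 * (1 - t) ^ 2 + (f⁻¹ - 1) * (t * (1 - t)) := by ring
    _ ≤ 2 + (f⁻¹ - 1) * (t * (1 - t)) := by linarith [sq_nonneg (1 - t)]

theorem inertialGain_le_mul_relaxationLoss_sub (hε : 0 < ε) (hq : q < 1) (hf : f ∈ Set.Ioc 0 1)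
    (hff' : f'⁻¹ ≤ f⁻¹ + 3) (ht0 : 0 ≤ t) (htq : t ≤ q)
    (hgap : ε ≤ relaxationLoss f s - inertialGain f' t) (hst : s ≤ t) :
    inertialGain f' t ≤ (2 / ε + (1 + 2 / ε) / (1 - q) ^ 2) *
      (relaxationLoss f s - inertialGain f' t) := by
  have hρ : 0 ≤ f⁻¹ - 1 := inv_sub_one_nonneg_of_mem_Ioc hf
  have hgain := inertialGain_le_of_inv_le_add_three hff' ⟨ht0, htq.trans hq.le⟩
  have hgain' : inertialGain f' t ≤ 2 + (f⁻¹ - 1) := by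
    have ht1 : t * (1 - t) ≤ 1 := by linarith [sq_nonneg t]
    linarith [mul_le_mul_of_nonneg_left ht1 hρ]
  have hGρ : (f⁻¹ - 1) * (1 - q) ^ 2 ≤ relaxationLoss f s - inertialGain f' t + 2 := by
    calc (f⁻¹ - 1) * (1 - q) ^ 2 ≤ (f⁻¹ - 1) * (1 - t) ^ 2 := by gcongr
      _ = relaxationLoss f t - (f⁻¹ - 1) * (t * (1 - t)) := by
          unfold relaxationLoss
          ring
      _ ≤ relaxationLoss f s - inertialGain f' t + 2 := by
          linarith [relaxationLoss_anti hf hst]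
  set G := relaxationLoss f s - inertialGain f' t
  have hone : 2 ≤ 2 / ε * G := by
    rw [div_mul_eq_mul_div, le_div_iff₀ hε]
    linarith
  have hq2 : 0 < (1 - q) ^ 2 := pow_pos (sub_pos.2 hq) 2
  calc inertialGain f' t ≤ 2 + (f⁻¹ - 1) := hgain'
    _ ≤ 2 / ε * G + (G + 2 / ε * G) / (1 - q) ^ 2 :=
      add_le_add hone ((le_div_iff₀ hq2).2 (by linarith))
    _ = (2 / ε + (1 + 2 / ε) / (1 - q) ^ 2) * G := by ring

end Coefficients

namespace Assumption32

variable {ε : ℝ} {θ φ : ℕ → ℝ} {n : ℕ}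

theorem relaxation_mem_Ioc (h : Assumption32 ε θ φ n) (hε : 0 ≤ ε) : φ n ∈ Set.Ioc 0 1 := by
  rcases h with ⟨hφ, -⟩ | ⟨hφ, -⟩ | ⟨hφ, -⟩
  · exact ⟨hφ.1, by linarith [hφ.2]⟩
  · norm_num [hφ]
  · exact ⟨by linarith [hφ.1], by linarith [hφ.2]⟩

theorem inv_relaxation_succ_le (h : Assumption32 ε θ φ n) : (φ (n + 1))⁻¹ ≤ (φ n)⁻¹ + 3 := by
  rcases h with ⟨-, -, hinv, -⟩ | ⟨hφ, hφ', -⟩ | ⟨hφ, hφ', -⟩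
  · linarith
  · norm_num [hφ, hφ']
  · have hinv' : (φ (n + 1))⁻¹ ≤ 2 := inv_le_of_inv_le₀ two_pos (by linarith [hφ'.1])
    have hinv : 0 ≤ (φ n)⁻¹ := inv_nonneg.2 (by linarith [hφ.1])
    linarith

theorem quadratic_nonneg (h : Assumption32 ε θ φ n) (hε : 0 ≤ ε) (hθ : 0 ≤ θ (n + 1)) :
    0 ≤ ((φ (n + 1))⁻¹ - 2) * θ (n + 1) ^ 2 - ((φ n)⁻¹ + (φ (n + 1))⁻¹ - 1) * θ (n + 1)
      + ((φ n)⁻¹ - 1 - ε) := by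
  have hφn := h.relaxation_mem_Ioc hε
  rcases h with ⟨-, hφ', -, hroot⟩ | ⟨hφ, hφ', hroot⟩ | ⟨-, hφ', hroot⟩
  · have hA : 2 < (φ (n + 1))⁻¹ := (lt_inv_comm₀ two_pos hφ'.1).2 (by linarith [hφ'.2])
    exact quadratic_nonneg_of_le_smaller_root (sub_pos.2 hA) hroot
  · norm_num [hφ, hφ']
    linarith
  · have hφ'0 : 0 < φ (n + 1) := by linarith [hφ'.1]
    have hA : 0 < 2 - (φ (n + 1))⁻¹ :=
      sub_pos.2 ((inv_lt_comm₀ hφ'0 two_pos).2 (by linarith [hφ'.1]))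
    have hB : 0 < (φ n)⁻¹ + (φ (n + 1))⁻¹ - 1 := by
      linarith [inv_sub_one_nonneg_of_mem_Ioc hφn, inv_pos.2 hφ'0]
    linarith [quadratic_le_of_le_larger_root hA hB hθ hroot]

theorem le_relaxationLoss_sub_inertialGain (h : Assumption32 ε θ φ n) (hε : 0 ≤ ε)
    (hθ : 0 ≤ θ (n + 1)) (hmono : θ n ≤ θ (n + 1)) :
    ε ≤ relaxationLoss (φ n) (θ n) - inertialGain (φ (n + 1)) (θ (n + 1)) := by
  linarith [h.quadratic_nonneg hε hθ, relaxationLoss_anti (h.relaxation_mem_Ioc hε) hmono,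
    relaxationLoss_sub_inertialGain (φ n) (φ (n + 1)) (θ (n + 1))]

end Assumption32

theorem exists_forall_norm_le_of_tendsto_norm_sub {E : Type*} [SeminormedAddCommGroup E]
    {x : ℕ → E} {p : E} {l : ℝ}
    (h : Tendsto (fun n => ‖x n - p‖) atTop (𝓝 l)) : ∃ M : ℝ, ∀ n, ‖x n‖ ≤ M := by
  obtain ⟨M, hM⟩ := h.bddAbove_range
  exact ⟨M + ‖p‖, fun n => (norm_le_norm_sub_add _ p).trans (by gcongr; exact hM ⟨n, rfl⟩)⟩

section InnerProductSpace

variable {H : Type*} [NormedAddCommGroup H] [InnerProductSpace ℝ H]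

theorem norm_sq_one_sub_smul_add_smul (t : ℝ) (u v : H) :
    ‖(1 - t) • u + t • v‖ ^ 2 =
      (1 - t) * ‖u‖ ^ 2 + t * ‖v‖ ^ 2 - t * (1 - t) * ‖u - v‖ ^ 2 := by
  simp only [norm_add_sq_real, norm_sub_sq_real, norm_smul, real_inner_smul_left,
    real_inner_smul_right, mul_pow, Real.norm_eq_abs, sq_abs]
  ring

theorem norm_sq_relaxation_le {p w z : H} {f : ℝ} (hf : 0 < f) (hz : ‖z - p‖ ≤ ‖w - p‖) :
    ‖(1 - f) • w + f • z - p‖ ^ 2 ≤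
      ‖w - p‖ ^ 2 - (f⁻¹ - 1) * ‖(1 - f) • w + f • z - w‖ ^ 2 := by
  have hsq : f * ‖z - p‖ ^ 2 ≤ f * ‖w - p‖ ^ 2 := by gcongr
  have hdist : (f⁻¹ - 1) * ‖(1 - f) • w + f • z - w‖ ^ 2 = f * (1 - f) * ‖w - z‖ ^ 2 := by
    rw [show (1 - f) • w + f • z - w = -f • (w - z) by module, norm_smul, mul_pow,
      Real.norm_eq_abs, sq_abs]
    field_simp
  rw [hdist, show (1 - f) • w + f • z - p = (1 - f) • (w - p) + f • (z - p) by module,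
    norm_sq_one_sub_smul_add_smul, sub_sub_sub_cancel_right]
  linarith

theorem norm_sq_extrapolation_sub (p x₀ x₁ : H) (t : ℝ) :
    ‖x₁ + t • (x₁ - x₀) - p‖ ^ 2 =
      (1 + t) * ‖x₁ - p‖ ^ 2 - t * ‖x₀ - p‖ ^ 2 + t * (1 + t) * ‖x₁ - x₀‖ ^ 2 := by
  rw [show x₁ + t • (x₁ - x₀) - p = (1 - -t) • (x₁ - p) + -t • (x₀ - p) by module,
    norm_sq_one_sub_smul_add_smul, sub_sub_sub_cancel_right]
  ring

theorem le_norm_sq_sub_smul {t : ℝ} (ht : 0 ≤ t) (u v : H) :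
    (1 - t) * ‖u‖ ^ 2 - t * (1 - t) * ‖v‖ ^ 2 ≤ ‖u - t • v‖ ^ 2 := by
  rw [show u - t • v = (1 - t) • u + t • (u - v) by module, norm_sq_one_sub_smul_add_smul,
    sub_sub_cancel]
  linarith [mul_nonneg ht (sq_nonneg ‖u - v‖)]

theorem norm_sq_relaxed_inertial_step_le {p x₀ x₁ x₂ w z : H} {t f : ℝ} (ht : 0 ≤ t)
    (hf : f ∈ Set.Ioc 0 1) (hw : w = x₁ + t • (x₁ - x₀)) (hx₂ : x₂ = (1 - f) • w + f • z)
    (hz : ‖z - p‖ ≤ ‖w - p‖) :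
    ‖x₂ - p‖ ^ 2 ≤ (1 + t) * ‖x₁ - p‖ ^ 2 - t * ‖x₀ - p‖ ^ 2
      + inertialGain f t * ‖x₁ - x₀‖ ^ 2 - relaxationLoss f t * ‖x₂ - x₁‖ ^ 2 := by
  have hrelax : ‖x₂ - p‖ ^ 2 ≤ ‖w - p‖ ^ 2 - (f⁻¹ - 1) * ‖x₂ - w‖ ^ 2 :=
    hx₂ ▸ norm_sq_relaxation_le hf.1 hz
  have hextra := hw ▸ norm_sq_extrapolation_sub p x₀ x₁ t
  have hdist : (1 - t) * ‖x₂ - x₁‖ ^ 2 - t * (1 - t) * ‖x₁ - x₀‖ ^ 2 ≤ ‖x₂ - w‖ ^ 2 := by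
    rw [hw, ← sub_sub]
    exact le_norm_sq_sub_smul ht _ _
  have hscaled := mul_le_mul_of_nonneg_left hdist (inv_sub_one_nonneg_of_mem_Ioc hf)
  unfold inertialGain relaxationLoss
  linarith

end InnerProductSpace

theorem stmt10_general {H : Type*} [NormedAddCommGroup H] [InnerProductSpace ℝ H]
    (wbar : H) (ε θbar : ℝ) (hε : 0 < ε) (hθbar1 : θbar < 1)
    (x w z : ℕ → H) (θ φ : ℕ → ℝ)
    (hθ0 : ∀ n ≥ 1, 0 ≤ θ n) (hθmono : ∀ n ≥ 1, θ n ≤ θ (n + 1)) (hθb : ∀ n ≥ 1, θ n ≤ θbar)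
    (h32 : ∀ n ≥ 1, Assumption32 ε θ φ n)
    (hw : ∀ n ≥ 1, w n = x n + θ n • (x n - x (n - 1)))
    (hx : ∀ n ≥ 1, x (n + 1) = (1 - φ n) • w n + φ n • z n)
    (hz : ∀ n ≥ 1, ‖z n - wbar‖ ≤ ‖w n - wbar‖) :
    Summable (fun n => ‖x (n + 1) - x n‖ ^ 2) ∧
    (∃ l : ℝ, Tendsto (fun n => ‖x n - wbar‖) atTop (𝓝 l)) ∧
    (∃ M : ℝ, ∀ n, ‖x n‖ ≤ M) := by
  have hpos (n : ℕ) : n + 1 ≥ 1 := n.succ_pos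
  have hφ (n : ℕ) := (h32 _ (hpos n)).relaxation_mem_Ioc hε.le
  have hgap (n : ℕ) := (h32 _ (hpos n)).le_relaxationLoss_sub_inertialGain hε.le
    (hθ0 _ (hpos _)) (hθmono _ (hpos n))
  have hstep (n : ℕ) := norm_sq_relaxed_inertial_step_le (hθ0 _ (hpos n)) (hφ n)
    (hw _ (hpos n)) (hx _ (hpos n)) (hz _ (hpos n))
  obtain ⟨hsum, l, hl⟩ := summable_and_exists_tendsto_of_inertial_descent
    (a := fun n => ‖x n - wbar‖ ^ 2) (d := fun n => ‖x (n + 1) - x n‖ ^ 2)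
    (t := fun n => θ (n + 1)) (σ := fun n => inertialGain (φ (n + 1)) (θ (n + 1)))
    (r := fun n => relaxationLoss (φ (n + 1)) (θ (n + 1)))
    hε hθbar1 (fun n => sq_nonneg _) (fun n => sq_nonneg _) (fun n => hθ0 _ (hpos n))
    (fun n => hθmono _ (hpos n)) (fun n => hθb _ (hpos n))
    (fun n => inertialGain_nonneg (hφ n) ⟨hθ0 _ (hpos n), (hθb _ (hpos n)).trans hθbar1.le⟩)
    hgap (fun n => inertialGain_le_mul_relaxationLoss_sub hε hθbar1 (hφ n)
      (h32 _ (hpos n)).inv_relaxation_succ_le (hθ0 _ (hpos _)) (hθb _ (hpos _)) (hgap n)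
      (hθmono _ (hpos n))) hstep
  have hnorm : Tendsto (fun n => ‖x n - wbar‖) atTop (𝓝 √l) := by
    simpa only [Real.sqrt_sq (norm_nonneg _)] using hl.sqrt
  exact ⟨hsum, ⟨√l, hnorm⟩, exists_forall_norm_le_of_tendsto_norm_sub hnorm⟩

theorem stmt10 {H : Type*} [NormedAddCommGroup H] [InnerProductSpace ℝ H]
    [CompleteSpace H]
    (wbar : H) (ε θbar φlow : ℝ) (hε : 0 < ε)
    (hθbar0 : 0 ≤ θbar) (hθbar1 : θbar < 1) (hφlow : 0 < φlow)
    (x w z : ℕ → H) (θ φ : ℕ → ℝ)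
    (hθ1 : θ 1 = 0) (hθ0 : ∀ n ≥ 1, 0 ≤ θ n)
    (hθmono : ∀ n ≥ 1, θ n ≤ θ (n+1)) (hθb : ∀ n ≥ 1, θ n ≤ θbar)
    (hφ : ∀ n ≥ 1, φlow ≤ φ n ∧ φ n ≤ 1)
    (h32 : ∀ n ≥ 1, Assumption32 ε θ φ n)
    (hw : ∀ n ≥ 1, w n = x n + θ n • (x n - x (n-1)))
    (hx : ∀ n ≥ 1, x (n+1) = (1 - φ n) • w n + φ n • z n)
    (hz : ∀ n ≥ 1, ‖z n - wbar‖ ≤ ‖w n - wbar‖) :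
    Summable (fun n => ‖x (n+1) - x n‖^2) ∧
    (∃ l : ℝ, Tendsto (fun n => ‖x n - wbar‖) atTop (𝓝 l)) ∧
    (∃ M : ℝ, ∀ n, ‖x n‖ ≤ M) := by
  exact stmt10_general wbar ε θbar hε hθbar1 x w z θ φ hθ0 hθmono hθb h32 hw hx hz
end

section
/- Let {γₙ}, {ψₙ} and {tₙ} be sequences of nonnegative real numbers such that γₙ₊₁ ≤ γₙ + ψₙ(γₙ − γₙ₋₁) + tₙ for all n ≥ 1, where 0 ≤ ψₙ ≤ ψ < 1 for some constant ψ and Σₙ₌₁^∞ tₙ < ∞. Then limₙ→∞ γₙ exists (i.e., the sequence {γₙ} converges). -/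
/-!
The positive parts of the increments of `γ` contract by the factor `ψbar < 1` at each step, up to
the summable error `t`, so they are summable: the total increase of `γ` is finite. Subtracting the
accumulated increase from `γ` leaves a nonincreasing sequence that is bounded below.
-/

open Filter Finset Topology

theorem summable_of_succ_le_mul_add_s11 {a b : ℕ → ℝ} {c : ℝ} (ha : ∀ n, 0 ≤ a n) (hc : c < 1)
    (hb : Summable b) (hab : ∀ n, a (n + 1) ≤ c * a n + b n) : Summable a := by
  obtain ⟨B, hB⟩ := hb.hasSum.tendsto_sum_nat.bddAbove_range
  refine summable_of_sum_range_le (c := (a 0 + B) / (1 - c)) ha fun N ↦ ?_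
  have sum_le : ∑ i ∈ range N, a i ≤ c * ∑ i ∈ range N, a i + (a 0 + B) :=
    calc ∑ i ∈ range N, a i
      _ ≤ ∑ i ∈ range (N + 1), a i := by
        rw [sum_range_succ]
        exact le_add_of_nonneg_right (ha N)
      _ = ∑ i ∈ range N, a (i + 1) + a 0 := sum_range_succ' a N
      _ ≤ ∑ i ∈ range N, (c * a i + b i) + a 0 := by
        gcongr with i
        exact hab i
      _ = c * ∑ i ∈ range N, a i + (a 0 + ∑ i ∈ range N, b i) := by
        rw [sum_add_distrib, mul_sum]
        ring
      _ ≤ c * ∑ i ∈ range N, a i + (a 0 + B) := by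
        gcongr
        exact hB ⟨N, rfl⟩
  rw [le_div_iff₀ (sub_pos.2 hc)]
  linarith

theorem exists_tendsto_of_bddBelow_of_succ_le_add {u p : ℕ → ℝ} (hu : BddBelow (Set.range u))
    (hp : Summable p) (hup : ∀ n, u (n + 1) ≤ u n + p n) : ∃ l, Tendsto u atTop (𝓝 l) := by
  have tendsto_sum := hp.hasSum.tendsto_sum_nat
  let v : ℕ → ℝ := fun n ↦ u n - ∑ i ∈ range n, p i
  have v_antitone : Antitone v := antitone_nat_of_succ_le fun n ↦ by
    simp only [v, sum_range_succ]
    linarith [hup n]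
  have v_bddBelow : BddBelow (Set.range v) := by
    obtain ⟨m, hm⟩ := hu
    obtain ⟨P, hP⟩ := tendsto_sum.bddAbove_range
    refine ⟨m - P, ?_⟩
    rintro _ ⟨n, rfl⟩
    exact sub_le_sub (hm ⟨n, rfl⟩) (hP ⟨n, rfl⟩)
  have tendsto_add := (tendsto_atTop_ciInf v_antitone v_bddBelow).add tendsto_sum
  exact ⟨_, by simpa only [v, sub_add_cancel] using tendsto_add⟩

section InertialRecursion

variable {γ ψ t : ℕ → ℝ} {c : ℝ}

theorem summable_posPart_sub_of_inertial (hψ : ∀ n, 0 ≤ ψ n) (hψc : ∀ n, ψ n ≤ c) (hc : c < 1)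
    (ht : Summable t)
    (hγ : ∀ n, γ (n + 2) ≤ γ (n + 1) + ψ n * (γ (n + 1) - γ n) + t n) :
    Summable fun n ↦ (γ (n + 1) - γ n)⁺ := by
  refine summable_of_succ_le_mul_add_s11 (fun n ↦ posPart_nonneg _) hc ht.abs fun n ↦ ?_
  set d := γ (n + 1) - γ n
  have hd : 0 ≤ d⁺ := posPart_nonneg d
  have inertia_le : ψ n * d ≤ c * d⁺ :=
    calc ψ n * d
      _ ≤ ψ n * d⁺ := mul_le_mul_of_nonneg_left (le_posPart d) (hψ n)
      _ ≤ c * d⁺ := mul_le_mul_of_nonneg_right (hψc n) hd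
  have bound_nonneg : 0 ≤ c * d⁺ + |t n| :=
    add_nonneg (mul_nonneg ((hψ n).trans (hψc n)) hd) (abs_nonneg _)
  refine sup_le ?_ bound_nonneg
  linarith [hγ n, le_abs_self (t n)]

theorem stmt11_general (hbdd : BddBelow (Set.range γ)) (hψ : ∀ n, 0 ≤ ψ n)
    (hψc : ∀ n, ψ n ≤ c) (hc : c < 1) (ht : Summable t)
    (hγ : ∀ n, γ (n + 2) ≤ γ (n + 1) + ψ n * (γ (n + 1) - γ n) + t n) :
    ∃ l, Tendsto γ atTop (𝓝 l) :=
  exists_tendsto_of_bddBelow_of_succ_le_add hbdd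
    (summable_posPart_sub_of_inertial hψ hψc hc ht hγ)
    fun _ ↦ sub_le_iff_le_add'.1 (le_posPart _)

end InertialRecursion

theorem stmt11 (γ ψ t : ℕ → ℝ) (ψbar : ℝ)
    (hγ : ∀ n, 0 ≤ γ n) (hψ : ∀ n, 0 ≤ ψ n) (ht : ∀ n, 0 ≤ t n)
    (hψb : ∀ n, ψ n ≤ ψbar) (hψbar : ψbar < 1)
    (hrec : ∀ n ≥ 1, γ (n+1) ≤ γ n + ψ n * (γ n - γ (n-1)) + t n)
    (hts : Summable t) :
    ∃ l : ℝ, Filter.Tendsto γ Filter.atTop (nhds l) :=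
  stmt11_general ⟨0, Set.forall_mem_range.2 hγ⟩ (fun n ↦ hψ (n + 1)) (fun n ↦ hψb (n + 1)) hψbar
    ((summable_nat_add_iff 1).2 hts) fun n ↦ hrec (n + 1) n.succ_pos
end

section
/- Let H be a real Hilbert space and C ⊆ H. Let F : H × H → ℝ satisfy the Lipschitz-like condition on H with constants a₁ > 0 and a₂ > 0, i.e., F(x, y) + F(y, w) ≥ F(x, w) − a₁‖x − y‖² − a₂‖y − w‖² for all x, y, w. Let {wₙ}, {yₙ}, {zₙ} be sequences in H, let μ ∈ (0, 1) and λ₁ > 0, and define {λₙ} recursively by: λₙ₊₁ = min{ μ(‖wₙ − yₙ‖² + ‖zₙ − yₙ‖²) / (2(F(wₙ, zₙ) − F(wₙ, yₙ) − F(yₙ, zₙ))), λₙ } if F(wₙ, zₙ) − F(wₙ, yₙ) − F(yₙ, zₙ) > 0, and λₙ₊₁ = λₙ otherwise. Then {λₙ} is a monotonically nonincreasing sequence and λₙ ≥ min{ μ/(2 max{a₁, a₂}), λ₁ } for all n ≥ 1. -/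
/-!
The Lipschitz-like condition bounds the defect `F w z - F w y - F y z` by `M` times
`d(w, y)² + d(z, y)²`, where `M = max a₁ a₂`. So whenever the defect is positive, the quotient
proposed as a new step size is at least `μ / (2 * M)`: an update either keeps the old step, or
lowers it to a value that is still at least `μ / (2 * M)`.
-/

/-- One update of a self-adaptive step size `l`, where `μ` is the relaxation parameter, `s` the sum
of squared distances between the iterates and `g` the quantity that triggers the update when it is
positive. -/
noncomputable def adaptiveStep (μ s g l : ℝ) : ℝ :=
  if 0 < g then min (μ * s / (2 * g)) l else l

section AdaptiveStep

variable {μ s g : ℝ}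

lemma eq_adaptiveStep_iff {l t : ℝ} :
    t = adaptiveStep μ s g l ↔
      (0 < g → t = min (μ * s / (2 * g)) l) ∧ (¬ 0 < g → t = l) := by
  unfold adaptiveStep
  split_ifs with hg <;> simp [hg]

lemma adaptiveStep_le (μ s g l : ℝ) : adaptiveStep μ s g l ≤ l := by
  unfold adaptiveStep
  split_ifs
  · exact min_le_right _ _
  · exact le_rfl

lemma div_two_mul_le_mul_div_two_mul {M : ℝ} (hμ : 0 ≤ μ) (hs : 0 ≤ s) (hg : 0 < g)
    (hgs : g ≤ M * s) : μ / (2 * M) ≤ μ * s / (2 * g) := by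
  have hM : 0 < M := pos_of_mul_pos_left (hg.trans_le hgs) hs
  rw [div_le_div_iff₀ (by positivity) (by positivity)]
  calc μ * (2 * g) ≤ μ * (2 * (M * s)) := by gcongr
    _ = μ * s * (2 * M) := by ring

lemma min_le_adaptiveStep {M : ℝ} (hμ : 0 ≤ μ) (hs : 0 ≤ s) (hgs : g ≤ M * s) (l : ℝ) :
    min (μ / (2 * M)) l ≤ adaptiveStep μ s g l := by
  unfold adaptiveStep
  split_ifs with hg
  · exact min_le_min_right l (div_two_mul_le_mul_div_two_mul hμ hs hg hgs)
  · exact min_le_right _ _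

end AdaptiveStep

lemma inf_le_of_inf_le_succ {α : Type*} [SemilatticeInf α] {u : ℕ → α} {c : α} {m : ℕ}
    (h : ∀ n ≥ m, c ⊓ u n ≤ u (n + 1)) {n : ℕ} (hn : m ≤ n) : c ⊓ u m ≤ u n := by
  induction n, hn using Nat.le_induction with
  | base => exact inf_le_right
  | succ n hn ih => exact (le_inf inf_le_left ih).trans (h n hn)

section LipschitzLike

variable {X : Type*} [PseudoMetricSpace X] {F : X → X → ℝ} {a₁ a₂ : ℝ}

/-- The Lipschitz-like condition (of Mastroeni) on a bifunction `F`, with constants `a₁` and `a₂`,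
on a pseudometric space instead of a Hilbert space. -/
def IsLipschitzLike (F : X → X → ℝ) (a₁ a₂ : ℝ) : Prop :=
  ∀ x y w, F x w - a₁ * dist x y ^ 2 - a₂ * dist y w ^ 2 ≤ F x y + F y w

lemma IsLipschitzLike.sub_sub_le (hF : IsLipschitzLike F a₁ a₂) (x y w : X) :
    F x w - F x y - F y w ≤ max a₁ a₂ * (dist x y ^ 2 + dist w y ^ 2) :=
  calc F x w - F x y - F y w ≤ a₁ * dist x y ^ 2 + a₂ * dist y w ^ 2 := by linarith [hF x y w]
    _ ≤ max a₁ a₂ * dist x y ^ 2 + max a₁ a₂ * dist y w ^ 2 := by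
      gcongr
      · exact le_max_left a₁ a₂
      · exact le_max_right a₁ a₂
    _ = max a₁ a₂ * (dist x y ^ 2 + dist w y ^ 2) := by rw [dist_comm y w, mul_add]

theorem stmt13_general (hF : IsLipschitzLike F a₁ a₂) {w y z : ℕ → X} {μ : ℝ} (hμ : 0 ≤ μ)
    {lam : ℕ → ℝ}
    (hrec : ∀ n ≥ 1, lam (n + 1) =
      adaptiveStep μ (dist (w n) (y n) ^ 2 + dist (z n) (y n) ^ 2)
        (F (w n) (z n) - F (w n) (y n) - F (y n) (z n)) (lam n)) :
    (∀ n ≥ 1, lam (n + 1) ≤ lam n) ∧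
      ∀ n ≥ 1, min (μ / (2 * max a₁ a₂)) (lam 1) ≤ lam n := by
  refine ⟨fun n hn => (hrec n hn).trans_le (adaptiveStep_le _ _ _ _), fun n hn => ?_⟩
  refine inf_le_of_inf_le_succ (fun k hk => ?_) hn
  rw [hrec k hk]
  exact min_le_adaptiveStep hμ (by positivity) (hF.sub_sub_le (w k) (y k) (z k)) (lam k)

end LipschitzLike

theorem stmt13 {H : Type*} [NormedAddCommGroup H] [InnerProductSpace ℝ H]
    [CompleteSpace H]
    (C : Set H) (F : H → H → ℝ) (a1 a2 : ℝ) (ha1 : 0 < a1) (ha2 : 0 < a2)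
    (hFLip : ∀ x y w : H, F x w - a1*‖x - y‖^2 - a2*‖y - w‖^2 ≤ F x y + F y w)
    (w y z : ℕ → H) (μ lam1 : ℝ) (hμ : μ ∈ Set.Ioo (0:ℝ) 1) (hlam1 : 0 < lam1)
    (lam : ℕ → ℝ) (hl1 : lam 1 = lam1)
    (hrec : ∀ n ≥ 1,
      (0 < F (w n) (z n) - F (w n) (y n) - F (y n) (z n) →
        lam (n+1) = min (μ*(‖w n - y n‖^2 + ‖z n - y n‖^2) /
          (2*(F (w n) (z n) - F (w n) (y n) - F (y n) (z n)))) (lam n)) ∧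
      (¬ 0 < F (w n) (z n) - F (w n) (y n) - F (y n) (z n) →
        lam (n+1) = lam n)) :
    (∀ n ≥ 1, lam (n+1) ≤ lam n) ∧
    (∀ n ≥ 1, min (μ/(2*max a1 a2)) lam1 ≤ lam n) := by
  simp only [← dist_eq_norm] at hFLip hrec
  exact hl1 ▸ stmt13_general hFLip hμ.1.le fun n hn => eq_adaptiveStep_iff.2 (hrec n hn)
end

section
/- Let H be a real Hilbert space and let C be a nonempty closed convex subset of H. Let F : H × H → ℝ satisfy: F(x, x) = 0 for all x ∈ C; F is pseudomonotone on C (for all x, y ∈ C, F(x, y) ≥ 0 implies F(y, x) ≤ 0); F satisfies the Lipschitz-like condition on H with constants a₁, a₂ > 0 (F(x, y) + F(y, w) ≥ F(x, w) − a₁‖x − y‖² − a₂‖y − w‖² for all x, y, w); and F(x, ·) is convex for every x. Let w̄ ∈ C satisfy F(w̄, y) ≥ 0 for all y ∈ C. Let μ ∈ (0, 1) and let {λₙ} be the step sizes of Algorithm 3.3. For each n, suppose yₙ is the minimizer over C of y ↦ λₙF(wₙ, y) + (1/2)‖wₙ − y‖², ωₙ is a subgradient of F(wₙ, ·) at yₙ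 such that wₙ − λₙωₙ − yₙ lies in the normal cone of C at yₙ, Tₙ := {x ∈ H : ⟨wₙ − λₙωₙ − yₙ, x − yₙ⟩ ≤ 0}, and zₙ is the minimizer over Tₙ of y ↦ λₙF(yₙ, y) + (1/2)‖wₙ − y‖², where λₙ₊₁ = min{ μ(‖wₙ − yₙ‖² + ‖zₙ − yₙ‖²) / (2(F(wₙ, zₙ) − F(wₙ, yₙ) − F(yₙ, zₙ))), λₙ } when F(wₙ, zₙ) − F(wₙ, yₙ) − F(yₙ, zₙ) > 0 and λₙ₊₁ = λₙ otherwise. Then ‖zₙ − w̄‖² ≤ ‖wₙ − w̄‖² − (1 − λₙμ/λₙ₊₁)(‖wₙ − yₙ‖² + ‖zₙ − yₙ‖²) for every n. -/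
open RealInnerProductSpace

/-!
Adding `½‖w - ·‖²` to a convex function makes it `1`-strongly convex, so a minimizer `z` beats any
competitor `v` by at least `½‖z - v‖²`. Applied to the second proximal step with `v = w̄`, where
`F(y, w̄) ≤ 0` by pseudomonotonicity, this bounds `‖z - w̄‖²` by
`‖w - w̄‖² - ‖w - z‖² - 2λ F(y, z)`. Expanding `‖w - z‖²` around `y` leaves the cross term
`2⟪w - y, z - y⟫`; since `z` lies in the half-space `T`, the subgradient inequality bounds it by
`2λ (F(w, z) - F(w, y))`. The remaining defect `2λ (F(w, z) - F(w, y) - F(y, z))` is what the step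
size rule compares with `‖w - y‖² + ‖z - y‖²`.
-/

section UniformConvexity

open Filter Topology

variable {E : Type*} [NormedAddCommGroup E] [NormedSpace ℝ E]

lemma add_modulus_le_of_isMinOn {s : Set E} {φ : ℝ → ℝ} {f : E → ℝ} {p v : E}
    (hf : UniformConvexOn s φ f) (hmin : IsMinOn f s p) (hp : p ∈ s) (hv : v ∈ s) :
    f p + φ ‖p - v‖ ≤ f v := by
  have segment_bound : ∀ t ∈ Set.Ioo (0 : ℝ) 1, f p + (1 - t) * φ ‖p - v‖ ≤ f v := by
    rintro t ⟨ht0, ht1⟩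
    have h1t : 0 ≤ 1 - t := sub_nonneg.2 ht1.le
    have hsum : 1 - t + t = 1 := sub_add_cancel 1 t
    have hle : f p ≤ (1 - t) * f p + t * f v - (1 - t) * t * φ ‖p - v‖ :=
      (isMinOn_iff.1 hmin _ (hf.1 hp hv h1t ht0.le hsum)).trans
        (hf.2 hp hv h1t ht0.le hsum)
    refine le_of_mul_le_mul_left ?_ ht0
    linarith
  have hlim : Tendsto (fun t : ℝ ↦ f p + (1 - t) * φ ‖p - v‖) (𝓝[>] 0)
      (𝓝 (f p + φ ‖p - v‖)) := by
    refine tendsto_nhdsWithin_of_tendsto_nhds (Continuous.tendsto' (by fun_prop) _ _ ?_)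
    rw [sub_zero, one_mul]
  refine le_of_tendsto hlim ?_
  filter_upwards [Ioo_mem_nhdsGT (zero_lt_one : (0 : ℝ) < 1)] using segment_bound

end UniformConvexity

/-- `p` is a proximal point of `f` at `x` relative to `s`: a minimizer over `s` of
`v ↦ f v + ½‖x - v‖²`. The step size of a proximal step is absorbed into `f`. -/
def IsProxOn {E : Type*} [NormedAddCommGroup E] (f : E → ℝ) (s : Set E) (x p : E) : Prop :=
  p ∈ s ∧ IsMinOn (fun v ↦ f v + (1 / 2) * ‖x - v‖ ^ 2) s p

section InnerProduct

variable {H : Type*} [NormedAddCommGroup H] [InnerProductSpace ℝ H]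

lemma strongConvexOn_add_norm_sub_sq {s : Set H} {f : H → ℝ} (hf : ConvexOn ℝ s f) (m : ℝ)
    (x : H) : StrongConvexOn s m fun v ↦ f v + m / 2 * ‖x - v‖ ^ 2 := by
  have hlin : ConvexOn ℝ s fun v ↦ -m * ⟪x, v⟫ :=
    (-m • innerₛₗ ℝ x).convexOn hf.1
  have hconst : ConvexOn ℝ s fun _ ↦ m / 2 * ‖x‖ ^ 2 := convexOn_const _ hf.1
  refine strongConvexOn_iff_convex.2 (((hf.add hlin).add hconst).congr fun v _ ↦ ?_)
  simp only [Pi.add_apply, norm_sub_sq_real]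
  ring

lemma IsProxOn.norm_sub_sq_le {f : H → ℝ} {s : Set H} {x p v : H} (hp : IsProxOn f s x p)
    (hf : ConvexOn ℝ s f) (hv : v ∈ s) :
    ‖p - v‖ ^ 2 ≤ ‖x - v‖ ^ 2 - ‖x - p‖ ^ 2 + 2 * (f v - f p) := by
  have hgap := add_modulus_le_of_isMinOn (strongConvexOn_add_norm_sub_sq hf 1 x) hp.2 hp.1 hv
  linarith

/-- `ω` is a subgradient of `f` at `u`, i.e. `ω ∈ ∂f(u)`; it linearizes the first proximal step of
the method. Subgradients are vectors of `H` rather than functionals, through the inner product. -/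
def IsSubgradientAt (f : H → ℝ) (u ω : H) : Prop :=
  ∀ v, f u + ⟪v - u, ω⟫ ≤ f v

/-- The half-space through `p` with outer normal `a`, which is the set `Tₙ` of the subgradient
extragradient method for `p = yₙ` and `a = wₙ - λₙωₙ - yₙ`. The vector `a` lies in the normal cone
of `C` at a point `p` of `C` exactly when `C ⊆ outerHalfSpace a p`. -/
def outerHalfSpace (a p : H) : Set H :=
  {v | ⟪a, v - p⟫ ≤ 0}

lemma convex_outerHalfSpace (a p : H) : Convex ℝ (outerHalfSpace a p) := by
  simpa only [outerHalfSpace, inner_sub_right, sub_nonpos] using!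
    convex_halfSpace_le (innerₛₗ ℝ a).isLinear ⟪a, p⟫

lemma IsSubgradientAt.inner_sub_le {f : H → ℝ} {w y z ω : H} {lam : ℝ}
    (hω : IsSubgradientAt f y ω) (hlam : 0 ≤ lam)
    (hz : z ∈ outerHalfSpace (w - lam • ω - y) y) :
    ⟪w - y, z - y⟫ ≤ lam * (f z - f y) := by
  have hsplit : ⟪w - lam • ω - y, z - y⟫ = ⟪w - y, z - y⟫ - lam * ⟪z - y, ω⟫ := by
    rw [sub_right_comm, inner_sub_left, real_inner_smul_left, real_inner_comm ω]
  calc ⟪w - y, z - y⟫ ≤ lam * ⟪z - y, ω⟫ := sub_nonpos.1 (hsplit.symm.trans_le hz)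
    _ ≤ lam * (f z - f y) := by
      gcongr
      exact le_sub_iff_add_le'.2 (hω z)

lemma two_mul_step_mul_defect_le {step defect bound : ℝ} (hstep : 0 ≤ step) (hbound : 0 ≤ bound)
    (hrule : 0 < defect → step ≤ bound / (2 * defect)) : 2 * step * defect ≤ bound := by
  rcases lt_or_ge 0 defect with hpos | hneg
  · have h := (le_div_iff₀ (by positivity)).1 (hrule hpos)
    linarith
  · have h := mul_nonpos_of_nonneg_of_nonpos hstep hneg
    linarith

theorem stmt15_general {F : H → H → ℝ} {w y z ω wbar : H} {μ lam lam' : ℝ}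
    (hlam : 0 ≤ lam) (hlam' : 0 < lam')
    (hFcv : ConvexOn ℝ (outerHalfSpace (w - lam • ω - y) y) (F y))
    (hω : IsSubgradientAt (F w) y ω)
    (hz : IsProxOn (fun v ↦ lam * F y v) (outerHalfSpace (w - lam • ω - y) y) w z)
    (hwbar : wbar ∈ outerHalfSpace (w - lam • ω - y) y) (hsol : F y wbar ≤ 0)
    (hstep : 2 * lam' * (F w z - F w y - F y z) ≤ μ * (‖w - y‖ ^ 2 + ‖z - y‖ ^ 2)) :
    ‖z - wbar‖ ^ 2 ≤ ‖w - wbar‖ ^ 2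
      - (1 - lam * μ / lam') * (‖w - y‖ ^ 2 + ‖z - y‖ ^ 2) := by
  have hprox : ‖z - wbar‖ ^ 2
      ≤ ‖w - wbar‖ ^ 2 - ‖w - z‖ ^ 2 + 2 * (lam * F y wbar - lam * F y z) :=
    hz.norm_sub_sq_le (hFcv.smul hlam) hwbar
  have hwbar_nonpos : lam * F y wbar ≤ 0 := mul_nonpos_of_nonneg_of_nonpos hlam hsol
  have hexpand : ‖w - z‖ ^ 2 = ‖w - y‖ ^ 2 - 2 * ⟪w - y, z - y⟫ + ‖z - y‖ ^ 2 := by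
    rw [← norm_sub_sq_real, sub_sub_sub_cancel_right]
  have hcross : ⟪w - y, z - y⟫ ≤ lam * (F w z - F w y) := hω.inner_sub_le hlam hz.1
  have hdefect : 2 * lam * (F w z - F w y - F y z)
      ≤ lam * μ / lam' * (‖w - y‖ ^ 2 + ‖z - y‖ ^ 2) := by
    calc 2 * lam * (F w z - F w y - F y z)
        = lam / lam' * (2 * lam' * (F w z - F w y - F y z)) := by field_simp
      _ ≤ lam / lam' * (μ * (‖w - y‖ ^ 2 + ‖z - y‖ ^ 2)) := by gcongr
      _ = lam * μ / lam' * (‖w - y‖ ^ 2 + ‖z - y‖ ^ 2) := by ring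
  linarith

end InnerProduct

theorem stmt15 {H : Type*} [NormedAddCommGroup H] [InnerProductSpace ℝ H]
    [CompleteSpace H]
    (C : Set H) (hCne : C.Nonempty) (hCcl : IsClosed C) (hCcv : Convex ℝ C)
    (F : H → H → ℝ) (a1 a2 : ℝ) (ha1 : 0 < a1) (ha2 : 0 < a2)
    -- F(x,x) = 0 on C
    (hF0 : ∀ x ∈ C, F x x = 0)
    -- F pseudomonotone on C
    (hFpm : ∀ x ∈ C, ∀ y ∈ C, 0 ≤ F x y → F y x ≤ 0)
    -- Lipschitz-like condition on H
    (hFLip : ∀ x y w : H, F x w - a1*‖x - y‖^2 - a2*‖y - w‖^2 ≤ F x y + F y w)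
    -- F(x, ·) convex
    (hFcv : ∀ x : H, ConvexOn ℝ Set.univ (F x))
    -- w̄ is a solution of the equilibrium problem
    (wbar : H) (hwbar : wbar ∈ C) (hsol : ∀ v ∈ C, 0 ≤ F wbar v)
    (μ : ℝ) (hμ : μ ∈ Set.Ioo (0:ℝ) 1)
    (lam : ℕ → ℝ) (hlampos : ∀ n, 0 < lam n)
    (w y z ω : ℕ → H) (T : ℕ → Set H)
    -- yₙ minimizes λₙ F(wₙ, ·) + ½‖wₙ - ·‖² over C
    (hy : ∀ n, y n ∈ C ∧ ∀ v ∈ C,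
      lam n * F (w n) (y n) + (1/2)*‖w n - y n‖^2
        ≤ lam n * F (w n) v + (1/2)*‖w n - v‖^2)
    -- ωₙ is a subgradient of F(wₙ, ·) at yₙ
    (hω : ∀ n, ∀ v : H, F (w n) (y n) + ⟪v - y n, ω n⟫ ≤ F (w n) v)
    -- wₙ - λₙωₙ - yₙ lies in the normal cone of C at yₙ
    (hN : ∀ n, ∀ v ∈ C, ⟪w n - lam n • ω n - y n, v - y n⟫ ≤ 0)
    (hT : ∀ n, T n = {v : H | ⟪w n - lam n • ω n - y n, v - y n⟫ ≤ 0})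
    -- zₙ minimizes λₙ F(yₙ, ·) + ½‖wₙ - ·‖² over Tₙ
    (hz : ∀ n, z n ∈ T n ∧ ∀ v ∈ T n,
      lam n * F (y n) (z n) + (1/2)*‖w n - z n‖^2
        ≤ lam n * F (y n) v + (1/2)*‖w n - v‖^2)
    -- the self-adaptive step size rule
    (hrec : ∀ n,
      (0 < F (w n) (z n) - F (w n) (y n) - F (y n) (z n) →
        lam (n+1) = min (μ*(‖w n - y n‖^2 + ‖z n - y n‖^2) /
          (2*(F (w n) (z n) - F (w n) (y n) - F (y n) (z n)))) (lam n)) ∧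
      (¬ 0 < F (w n) (z n) - F (w n) (y n) - F (y n) (z n) →
        lam (n+1) = lam n)) :
    ∀ n, ‖z n - wbar‖^2 ≤ ‖w n - wbar‖^2
      - (1 - lam n * μ / lam (n+1)) * (‖w n - y n‖^2 + ‖z n - y n‖^2) := by
  intro n
  obtain rfl : T = fun n ↦ outerHalfSpace (w n - lam n • ω n - y n) (y n) := funext hT
  have hsolDual : F (y n) wbar ≤ 0 := hFpm wbar hwbar (y n) (hy n).1 (hsol (y n) (hy n).1)
  have hstep : 2 * lam (n + 1) * (F (w n) (z n) - F (w n) (y n) - F (y n) (z n))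
      ≤ μ * (‖w n - y n‖ ^ 2 + ‖z n - y n‖ ^ 2) :=
    two_mul_step_mul_defect_le (hlampos (n + 1)).le (mul_nonneg hμ.1.le (by positivity))
      fun hpos ↦ ((hrec n).1 hpos).trans_le (min_le_left _ _)
  exact stmt15_general (hlampos n).le (hlampos (n + 1))
    ((hFcv (y n)).subset (Set.subset_univ _) (convex_outerHalfSpace _ _)) (hω n) (hz n)
    (hN n wbar hwbar) hsolDual hstep
end

section
/- Let H = ℓ²(ℝ) be the real Hilbert space of square-summable sequences and let C = {x ∈ H : ‖x‖ ≤ 1} be the closed unit ball. Define F : C × C → ℝ by F(x, y) = (3 − ‖x‖)⟨x, y − x⟩. Then F is pseudomonotone on C: for all x, y ∈ C, if F(x, y) ≥ 0 then F(y, x) ≤ 0. -/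
open RealInnerProductSpace

variable {α R : Type*}

/-- Pseudomonotonicity on `C` of a bifunction `F`, in the sense of equilibrium problems. The
bifunction is total, but only its values on `C × C` matter. -/
def PseudomonotoneOn [Zero R] [LE R] (F : α → α → R) (C : Set α) : Prop :=
  ∀ ⦃x⦄, x ∈ C → ∀ ⦃y⦄, y ∈ C → 0 ≤ F x y → F y x ≤ 0

namespace PseudomonotoneOn

theorem of_add_nonpos [AddZeroClass R] [Preorder R] [AddRightMono R] {F : α → α → R} {C : Set α}
    (hF : ∀ x ∈ C, ∀ y ∈ C, F x y + F y x ≤ 0) : PseudomonotoneOn F C :=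
  fun x hx y hy hxy ↦ (le_add_of_nonneg_left hxy).trans (hF x hx y hy)

theorem pos_mul [MulZeroClass R] [Preorder R] [PosMulMono R] [PosMulReflectLE R]
    {F : α → α → R} {C : Set α} {g : α → R}
    (hF : PseudomonotoneOn F C) (hg : ∀ x ∈ C, 0 < g x) :
    PseudomonotoneOn (fun x y ↦ g x * F x y) C := fun x hx y hy hxy ↦
  have hFxy : 0 ≤ F x y := le_of_mul_le_mul_left (by rwa [mul_zero]) (hg x hx)
  mul_nonpos_of_nonneg_of_nonpos (hg y hy).le (hF hx hy hFxy)

end PseudomonotoneOn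

variable {E : Type*} [SeminormedAddCommGroup E] [InnerProductSpace ℝ E]

theorem pseudomonotoneOn_inner_sub {A : E → E} {C : Set E}
    (hA : ∀ x ∈ C, ∀ y ∈ C, 0 ≤ ⟪A x - A y, x - y⟫) :
    PseudomonotoneOn (fun x y ↦ ⟪A x, y - x⟫) C := by
  refine .of_add_nonpos fun x hx y hy ↦ ?_
  calc ⟪A x, y - x⟫ + ⟪A y, x - y⟫ = -⟪A x - A y, x - y⟫ := by
        rw [← neg_sub x y, inner_neg_right, inner_sub_left]; ring
    _ ≤ 0 := neg_nonpos.2 (hA x hx y hy)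

theorem stmt17_general (r : ℝ) :
    PseudomonotoneOn (fun x y : E ↦ (r - ‖x‖) * ⟪x, y - x⟫) (Metric.ball 0 r) :=
  (pseudomonotoneOn_inner_sub (A := id) fun _ _ _ _ ↦ real_inner_self_nonneg).pos_mul
    fun _ hx ↦ sub_pos.2 (mem_ball_zero_iff.1 hx)

theorem stmt17 (x y : lp (fun _ : ℕ => ℝ) 2)
    (hx : ‖x‖ ≤ 1) (hy : ‖y‖ ≤ 1)
    (h : 0 ≤ (3 - ‖x‖) * ⟪x, y - x⟫) :
    (3 - ‖y‖) * ⟪y, x - y⟫ ≤ 0 :=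
  stmt17_general 3 (mem_ball_zero_iff.2 (by linarith)) (mem_ball_zero_iff.2 (by linarith)) h
end

section
/- Let H = ℓ²(ℝ) be the real Hilbert space of square-summable sequences and let C = {x ∈ H : ‖x‖ ≤ 1} be the closed unit ball. Define F : C × C → ℝ by F(x, y) = (3 − ‖x‖)⟨x, y − x⟩. Then F satisfies the Lipschitz-like condition on C with constants a₁ = a₂ = 5/2: for all x, y, w ∈ C, F(x, y) + F(y, w) ≥ F(x, w) − (5/2)‖x − y‖² − (5/2)‖y − w‖². -/
open RealInnerProductSpace

/-!
Put `A x = (3 - ‖x‖) • x`, so that `F(x, y) = ⟪A x, y - x⟫` and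
`F(x, w) - F(x, y) - F(y, w) = ⟪A x - A y, w - y⟫`. If `A` is `K`-Lipschitz, Cauchy–Schwarz and
`2ab ≤ a² + b²` bound this by `K / 2 * (‖x - y‖² + ‖y - w‖²)`. On the ball of radius `3` the
operator `A` is `3`-Lipschitz, and `3 / 2 ≤ 5 / 2`.
-/

open scoped NNReal

theorem lipschitzOnWith_sub_norm_smul {E : Type*} [SeminormedAddCommGroup E] [NormedSpace ℝ E]
    (c : ℝ≥0) :
    LipschitzOnWith c (fun x : E ↦ (c - ‖x‖) • x) (Metric.closedBall 0 c) := by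
  refine lipschitzOnWith_iff_norm_sub_le.2 fun x hx y hy ↦ ?_
  -- Splitting off `y`, the vector of smaller norm, gives the constant `c - ‖x‖ + ‖y‖ ≤ c`.
  wlog hyx : ‖y‖ ≤ ‖x‖ generalizing x y
  · rw [norm_sub_rev, norm_sub_rev x]
    exact this y hy x hx (le_of_not_ge hyx)
  have hxc : 0 ≤ c - ‖x‖ := sub_nonneg.2 (mem_closedBall_zero_iff.1 hx)
  calc ‖(c - ‖x‖) • x - (c - ‖y‖) • y‖
      = ‖(c - ‖x‖) • (x - y) - (‖x‖ - ‖y‖) • y‖ := by congr 1; module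
    _ ≤ ‖(c - ‖x‖) • (x - y)‖ + ‖(‖x‖ - ‖y‖) • y‖ := norm_sub_le _ _
    _ = (c - ‖x‖) * ‖x - y‖ + (‖x‖ - ‖y‖) * ‖y‖ := by
      rw [norm_smul_of_nonneg hxc, norm_smul_of_nonneg (sub_nonneg.2 hyx)]
    _ ≤ (c - ‖x‖) * ‖x - y‖ + ‖x - y‖ * ‖x‖ := by
      gcongr
      exact norm_sub_norm_le x y
    _ = c * ‖x - y‖ := by ring

section InnerProductSpace

variable {E : Type*} [SeminormedAddCommGroup E] [InnerProductSpace ℝ E]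

theorem inner_sub_sub_le_add_of_lipschitzOnWith {K : ℝ≥0} {A : E → E} {s : Set E}
    (hA : LipschitzOnWith K A s) {x y : E} (hx : x ∈ s) (hy : y ∈ s) (w : E) :
    ⟪A x, w - x⟫ - K / 2 * ‖x - y‖ ^ 2 - K / 2 * ‖y - w‖ ^ 2
      ≤ ⟪A x, y - x⟫ + ⟪A y, w - y⟫ := by
  have defect_eq : ⟪A x, w - x⟫ - ⟪A x, y - x⟫ - ⟪A y, w - y⟫ = ⟪A x - A y, w - y⟫ := by
    simp only [inner_sub_left, inner_sub_right]
    ring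
  have defect_le : ⟪A x - A y, w - y⟫ ≤ K / 2 * (‖x - y‖ ^ 2 + ‖y - w‖ ^ 2) :=
    calc ⟪A x - A y, w - y⟫
        ≤ ‖A x - A y‖ * ‖w - y‖ := real_inner_le_norm _ _
      _ ≤ K * ‖x - y‖ * ‖y - w‖ := by
        rw [norm_sub_rev w y]
        gcongr
        exact hA.norm_sub_le hx hy
      _ = K / 2 * (2 * ‖x - y‖ * ‖y - w‖) := by ring
      _ ≤ K / 2 * (‖x - y‖ ^ 2 + ‖y - w‖ ^ 2) := by
        gcongr
        exact two_mul_le_add_sq _ _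
  linarith

theorem stmt18_general {c : ℝ≥0} {x y : E} (hx : ‖x‖ ≤ c) (hy : ‖y‖ ≤ c) (w : E) :
    (c - ‖x‖) * ⟪x, w - x⟫ - c / 2 * ‖x - y‖ ^ 2 - c / 2 * ‖y - w‖ ^ 2
      ≤ (c - ‖x‖) * ⟪x, y - x⟫ + (c - ‖y‖) * ⟪y, w - y⟫ := by
  simpa only [real_inner_smul_left] using
    inner_sub_sub_le_add_of_lipschitzOnWith (lipschitzOnWith_sub_norm_smul c)
      (mem_closedBall_zero_iff.2 hx) (mem_closedBall_zero_iff.2 hy) w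

end InnerProductSpace

theorem stmt18 (x y w : lp (fun _ : ℕ => ℝ) 2)
    (hx : ‖x‖ ≤ 1) (hy : ‖y‖ ≤ 1) (hw : ‖w‖ ≤ 1) :
    (3 - ‖x‖) * ⟪x, w - x⟫ - (5/2)*‖x - y‖^2 - (5/2)*‖y - w‖^2
      ≤ (3 - ‖x‖) * ⟪x, y - x⟫ + (3 - ‖y‖) * ⟪y, w - y⟫ := by
  have h := stmt18_general (c := 3) (hx.trans (by norm_num)) (hy.trans (by norm_num)) w
  rw [NNReal.coe_ofNat] at h
  linarith [sq_nonneg ‖x - y‖, sq_nonneg ‖y - w‖]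
end
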